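/- arXiv:2410.00740 — 2 statements merged into one kernel-verified Lean document; each statement's English description precedes it below -/
import Mathlib

section
/- Let 𝒟 and ℱ be categories with finite limits, 𝒞 a predicate on the objects of 𝒟 and ℰ a predicate on the objects of ℱ, and G : 𝒟 ⥤ ℱ a functor preserving finite limits. Then G satisfies the site-morphism condition from (𝒟,𝒞) to (ℱ,ℰ) if and only if G is cover-preserving for the induced topologies: for every object D of 𝒟 and every sieve S with S ∈ J_𝒞(D), the pushforward sieve Sieve.functorPushforward G S belongs to J_ℰ(G.obj D). -/
open CategoryTheory CategoryTheory.Limits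

universe v u w z

/-- The Grothendieck topology induced by a predicate `𝒞` on the objects of `𝒟`: a sieve
on `D` is covering exactly when it contains every morphism `u : C ⟶ D` with `𝒞 C`. -/
def inducedTopology {𝒟 : Type u} [Category.{v} 𝒟] (𝒞 : 𝒟 → Prop) :
    GrothendieckTopology 𝒟 where
  sieves D := {S | ∀ ⦃C : 𝒟⦄ (u : C ⟶ D), 𝒞 C → S.arrows u}
  top_mem' := by intro D C u _; trivial
  pullback_stable' := by
    intro D D' S f hS C u hC
    exact hS (u ≫ f) hC
  transitive' := by
    intro D S hS R hR C u hC
    simpa using hR (hS u hC) (𝟙 C) hC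

/-- The site-morphism condition for `G : 𝒟 ⥤ ℱ` from `(𝒟, 𝒞)` to `(ℱ, ℰ)`. -/
def SiteMorphism {𝒟 : Type u} [Category.{v} 𝒟] {ℱ : Type w} [Category.{z} ℱ]
    (𝒞 : 𝒟 → Prop) (ℰ : ℱ → Prop) (G : 𝒟 ⥤ ℱ) : Prop :=
  ∀ (D : 𝒟) (E : ℱ), ℰ E → ∀ f : E ⟶ G.obj D,
    ∃ (C : 𝒟) (_ : 𝒞 C) (g : C ⟶ D) (h : E ⟶ G.obj C), h ≫ G.map g = f

/-- A finite-limit-preserving functor satisfies the site-morphism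
condition from `(𝒟,𝒞)` to `(ℱ,ℰ)` iff it is cover-preserving for the induced topologies. -/
theorem siteMorphism_iff_coverPreserving {𝒟 : Type u} [Category.{v} 𝒟]
    {ℱ : Type w} [Category.{z} ℱ] [HasFiniteLimits 𝒟] [HasFiniteLimits ℱ]
    (𝒞 : 𝒟 → Prop) (ℰ : ℱ → Prop) (G : 𝒟 ⥤ ℱ) [PreservesFiniteLimits G] :
    SiteMorphism 𝒞 ℰ G ↔
      ∀ (D : 𝒟) (S : Sieve D), S ∈ inducedTopology 𝒞 D →
        S.functorPushforward G ∈ inducedTopology ℰ (G.obj D) := by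
  constructor
  · intro hG D S hS E f hE
    obtain ⟨C, hC, g, h, hf⟩ := hG D E hE f
    exact ⟨C, g, h, hS g hC, hf.symm⟩
  · intro hG D E hE f
    let P : Presieve D := fun C _ => 𝒞 C
    have hP : Sieve.generate P ∈ inducedTopology 𝒞 D :=
      fun C u hC => ⟨C, 𝟙 C, u, hC, Category.id_comp u⟩
    obtain ⟨Z, g, h, ⟨C, a, b, hC, hg⟩, hf⟩ := hG D _ hP f hE
    refine ⟨C, hC, b, h ≫ G.map a, ?_⟩
    rw [hf, ← hg, Category.assoc, G.map_comp]
end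

section
/- Let 𝒟 and ℱ be small categories with finite limits, 𝒞 a predicate on the objects of 𝒟 closed under finite limits, ℰ a predicate on the objects of ℱ closed under finite limits, and G : 𝒟 ⥤ ℱ a functor preserving finite limits that satisfies the site-morphism condition from (𝒟,𝒞) to (ℱ,ℰ). Then for every presheaf P : ℱᵒᵖ ⥤ Type that is a sheaf for the induced topology J_ℰ, the presheaf G.op ⋙ P : 𝒟ᵒᵖ ⥤ Type is a sheaf for the induced topology J_𝒞. -/
open CategoryTheory CategoryTheory.Limits

universe v u w z

/-- A predicate on objects is closed under finite limits. -/
def ClosedUnderFiniteLimits {𝒟 : Type u} [Category.{v} 𝒟] [HasTerminal 𝒟]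
    (𝒞 : 𝒟 → Prop) : Prop :=
  𝒞 (⊤_ 𝒟) ∧ ∀ {X Y Z : 𝒟} (f : X ⟶ Z) (g : Y ⟶ Z), 𝒞 X → 𝒞 Y → 𝒞 Z →
    ∃ (P : 𝒟) (_ : 𝒞 P) (a : P ⟶ X) (b : P ⟶ Y), IsPullback a b f g

/-- Pulling back along a finite-limit-preserving site morphism takes
sheaves for the induced topology `J_ℰ` to sheaves for the induced topology `J_𝒞`. -/
theorem isSheaf_comp_of_siteMorphism {𝒟 ℱ : Type u} [SmallCategory 𝒟] [SmallCategory ℱ]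
    [HasFiniteLimits 𝒟] [HasFiniteLimits ℱ]
    (𝒞 : 𝒟 → Prop) (ℰ : ℱ → Prop)
    (h𝒞 : ClosedUnderFiniteLimits 𝒞) (hℰ : ClosedUnderFiniteLimits ℰ)
    (G : 𝒟 ⥤ ℱ) [PreservesFiniteLimits G] (hsite : SiteMorphism 𝒞 ℰ G)
    (P : ℱᵒᵖ ⥤ Type u) (hP : Presieve.IsSheaf (inducedTopology ℰ) P) :
    Presieve.IsSheaf (inducedTopology 𝒞) (G.op ⋙ P) := by
  have : RepresentablyFlat G := flat_of_preservesFiniteLimits G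
  have hc : CoverPreserving (inducedTopology 𝒞) (inducedTopology ℰ) G := by
    constructor
    intro D S hS E f hE
    obtain ⟨C, hC, g, h, rfl⟩ := hsite D E hE f
    exact ⟨C, g, h, hS g hC, rfl⟩
  have : G.IsContinuous (inducedTopology 𝒞) (inducedTopology ℰ) :=
    Functor.isContinuous_iff_coverPreserving.2 hc
  exact Functor.op_comp_isSheaf_of_isSheaf_type G (inducedTopology 𝒞) hP
end
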